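/- Let B be a ring satisfying: B is left noetherian and semi-graded (C1); B_0 is left noetherian (C2); each B_n is a finitely generated left B_0-module (C3); and B_0 ⊆ Z(B) (C4). Then the collection stor-B of torsion modules forms a Serre subcategory of the abelian category sgr-B; that is, stor-B is a full subcategory and for every short exact sequence 0 → M' → M → M'' → 0 in sgr-B, M is torsion if and only if both M' and M'' are torsion. Consequently the quotient category qsgr-B := sgr-B / stor-B is abelian. -/

import Mathlib

open scoped DirectSum
open CategoryTheory

/-- A ring `B` is *semi-graded (SG)*. -/
structure SemiGraded (B : Type) [Ring B] where
  comp : ℕ → AddSubgroup B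
  internal : DirectSum.IsInternal comp
  mul_mem : ∀ m n : ℕ, ∀ a ∈ comp m, ∀ b ∈ comp n, a * b ∈ ⨆ k ∈ Set.Iic (m + n), comp k
  one_mem' : 1 ∈ comp 0

/-- A two-sided ideal viewed as an additive subgroup. -/
def TwoSidedIdeal.addSubgroup {B : Type} [Ring B] (I : TwoSidedIdeal B) : AddSubgroup B where
  carrier := {x | x ∈ I}
  zero_mem' := I.zero_mem
  add_mem' := I.add_mem
  neg_mem' := I.neg_mem

variable (B : Type) [Ring B] (SG : SemiGraded B)

/-- `B_{≥s}`: the least two-sided ideal of `B` containing `⊕_{p≥s} B_p` which is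
semi-graded as a left ideal and a direct summand of `B`. -/
def SemiGraded.Bge (s : ℕ) : TwoSidedIdeal B :=
  sInf {I : TwoSidedIdeal B |
    (⨆ p ∈ Set.Ici s, SG.comp p) ≤ I.addSubgroup ∧
    I.addSubgroup = (⨆ n : ℕ, (I.addSubgroup ⊓ SG.comp n)) ∧
    ∃ J : AddSubgroup B, I.addSubgroup ⊓ J = ⊥ ∧ I.addSubgroup ⊔ J = ⊤}

/-- An element `x` of a `B`-module `M` is *torsion* if `(B_{≥s})^n x = 0` for some
`s, n ≥ 0`. -/
def SemiGraded.IsTorsionElem {M : Type} [AddCommGroup M] [Module B M] (x : M) : Prop :=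
  ∃ s nn : ℕ, ∀ c : Fin nn → B, (∀ j, c j ∈ SG.Bge B s) → (List.ofFn c).prod • x = 0

/-- An object of the category `sgr-B`. -/
structure SgrObj where
  carrier : Type
  [acg : AddCommGroup carrier]
  [mod : Module B carrier]
  comp : ℤ → AddSubgroup carrier
  internal : DirectSum.IsInternal comp
  smul_mem : ∀ (m : ℕ) (n : ℤ), ∀ b ∈ SG.comp m, ∀ v ∈ comp n,
    b • v ∈ ⨆ k ∈ Set.Iic ((m : ℤ) + n), comp k
  fg : Module.Finite B carrier

attribute [instance] SgrObj.acg SgrObj.mod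

/-- The category `sgr-B` of finitely generated semi-graded left `B`-modules with
homogeneous `B`-homomorphisms. -/
instance sgrCategory : Category (SgrObj B SG) where
  Hom M N := {f : M.carrier →ₗ[B] N.carrier // ∀ n : ℤ, ∀ x ∈ M.comp n, f x ∈ N.comp n}
  id M := ⟨LinearMap.id, fun n x hx => hx⟩
  comp f g := ⟨g.1.comp f.1, fun n x hx => g.2 n _ (f.2 n x hx)⟩

/-- A torsion object of `sgr-B`: all its elements are torsion. -/
def SgrObj.IsTorsion (M : SgrObj B SG) : Prop :=
  ∀ x : M.carrier, SG.IsTorsionElem B x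

/-- The morphisms of `sgr-B` with torsion kernel and torsion cokernel; the quotient
category `qsgr-B = sgr-B / stor-B` is the localization at this class. -/
def torsionW : MorphismProperty (SgrObj B SG) := fun M N f =>
  (∀ x : M.carrier, f.1 x = 0 → SG.IsTorsionElem B x) ∧
  (∀ y : N.carrier, ∃ s nn : ℕ, ∀ c : Fin nn → B, (∀ j, c j ∈ SG.Bge B s) →
    (List.ofFn c).prod • y ∈ LinearMap.range f.1)

section Internal

variable {A : Type} [AddCommGroup A] {S : ℤ → AddSubgroup A} {p : ℤ → A →+ A}

/-- A family of subgroups which admits a complete system of projections is an internal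
direct sum decomposition. -/
theorem isInternal_of_proj (hid : ∀ n, ∀ x ∈ S n, p n x = x)
    (hne : ∀ m n, m ≠ n → ∀ x ∈ S m, p n x = 0) (hmem : ∀ n x, p n x ∈ S n)
    (hsum : ∀ x, ∃ s : Finset ℤ, ∀ t, s ⊆ t → ∑ n ∈ t, p n x = x) :
    DirectSum.IsInternal S := by
  have key : ∀ (n : ℤ) (z : DirectSum ℤ fun i => S i),
      p n (DirectSum.coeAddMonoidHom S z) = z n := by
    intro n z
    induction z using DirectSum.induction_on with
    | zero => simp
    | of i x =>
      rw [DirectSum.coeAddMonoidHom_of]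
      by_cases h : i = n
      · subst h
        rw [hid _ _ x.2, DirectSum.of_eq_same]
      · rw [hne _ _ h _ x.2, DirectSum.of_eq_of_ne _ _ _ (Ne.symm h)]
        rfl
    | add x y hx hy => rw [map_add, map_add, hx, hy]; rfl
  refine ⟨(injective_iff_map_eq_zero _).2 fun z hz => ?_, fun x => ?_⟩
  · refine DFinsupp.ext fun n => Subtype.ext ?_
    have := key n z
    rw [hz, map_zero] at this
    exact this.symm
  · obtain ⟨s, hs⟩ := hsum x
    refine ⟨∑ n ∈ s, DirectSum.of (fun i => S i) n ⟨p n x, hmem n x⟩, ?_⟩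
    rw [map_sum]
    simpa using hs s subset_rfl

theorem mem_iSup_Iic_of_proj (hmem : ∀ n x, p n x ∈ S n)
    (hsum : ∀ x, ∃ s : Finset ℤ, ∀ t, s ⊆ t → ∑ n ∈ t, p n x = x) {N : ℤ} {x : A}
    (hx : ∀ k, N < k → p k x = 0) : x ∈ ⨆ k ∈ Set.Iic N, S k := by
  obtain ⟨s, hs⟩ := hsum x
  rw [← hs s subset_rfl]
  refine AddSubgroup.sum_mem _ fun k _ => ?_
  by_cases hk : k ≤ N
  · exact AddSubgroup.mem_iSup_of_mem k (AddSubgroup.mem_iSup_of_mem hk (hmem k x))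
  · rw [hx k (not_le.1 hk)]
    exact zero_mem _

end Internal

section PowColon

variable {B}
variable {M N : Type} [AddCommGroup M] [Module B M] [AddCommGroup N] [Module B N]

/-- The submodule of those `x` such that all products of `n` elements of the two-sided
ideal `J` send `x` into `K`. -/
def powColon (J : TwoSidedIdeal B) (K : Submodule B M) (n : ℕ) : Submodule B M where
  carrier := {x | ∀ r : B, ∀ c : Fin n → B, (∀ j, c j ∈ J) → ((List.ofFn c).prod * r) • x ∈ K}
  zero_mem' := by simp
  add_mem' hx hy r c hc := by
    rw [smul_add]
    exact K.add_mem (hx r c hc) (hy r c hc)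
  smul_mem' b x hx r c hc := by
    rw [smul_smul, mul_assoc]
    exact hx (r * b) c hc

theorem mul_prod_ofFn_eq {J : TwoSidedIdeal B} : ∀ {n : ℕ} (c : Fin n → B), (∀ j, c j ∈ J) →
    ∀ r : B, ∃ (b : B) (d : Fin n → B), (∀ j, d j ∈ J) ∧
      (List.ofFn c).prod * r = b * (List.ofFn d).prod
  | 0, c, _, r => ⟨r, c, fun j => j.elim0, by simp⟩
  | n + 1, c, hc, r => by
    refine ⟨1, Fin.snoc (fun i : Fin n => c i.castSucc) (c (Fin.last n) * r), fun j => ?_, ?_⟩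
    · refine Fin.lastCases ?_ (fun i => ?_) j
      · simpa using J.mul_mem_right _ _ (hc _)
      · simpa using hc _
    · rw [List.ofFn_succ', List.ofFn_succ']
      simp [mul_assoc]

theorem mem_powColon {J : TwoSidedIdeal B} {K : Submodule B M} {n : ℕ} {x : M} :
    x ∈ powColon J K n ↔
      ∀ c : Fin n → B, (∀ j, c j ∈ J) → (List.ofFn c).prod • x ∈ K := by
  refine ⟨fun h c hc => by simpa using h 1 c hc, fun h r c hc => ?_⟩
  obtain ⟨b, d, hd, e⟩ := mul_prod_ofFn_eq c hc r
  rw [e, mul_smul]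
  exact K.smul_mem _ (h d hd)

theorem powColon_mono {J : TwoSidedIdeal B} {K L : Submodule B M} (h : K ≤ L) (n : ℕ) :
    powColon J K n ≤ powColon J L n :=
  fun _ hx r c hc => h (hx r c hc)

theorem powColon_anti {I J : TwoSidedIdeal B} (h : I ≤ J) (K : Submodule B M) (n : ℕ) :
    powColon J K n ≤ powColon I K n :=
  fun _ hx r c hc => hx r c fun j => h (hc j)

theorem powColon_comap (J : TwoSidedIdeal B) (f : M →ₗ[B] N) (K : Submodule B N) (n : ℕ) :
    powColon J (K.comap f) n = (powColon J K n).comap f := by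
  ext x
  simp [mem_powColon]

theorem powColon_powColon_le (J : TwoSidedIdeal B) (K : Submodule B M) (m n : ℕ) :
    powColon J (powColon J K m) n ≤ powColon J K (m + n) := by
  intro x hx
  rw [mem_powColon] at hx ⊢
  intro c hc
  have := mem_powColon.1 (hx (fun j => c (Fin.natAdd m j)) fun j => hc _)
    (fun j => c (Fin.castAdd n j)) fun j => hc _
  rw [smul_smul, ← List.prod_append] at this
  rwa [List.ofFn_add]

theorem le_powColon (J : TwoSidedIdeal B) (K : Submodule B M) (n : ℕ) : K ≤ powColon J K n :=
  fun _ hx _ _ _ => K.smul_mem _ hx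

theorem powColon_mono_right (J : TwoSidedIdeal B) (K : Submodule B M) {m n : ℕ} (h : m ≤ n) :
    powColon J K m ≤ powColon J K n := by
  obtain ⟨k, rfl⟩ := Nat.exists_eq_add_of_le h
  exact (le_powColon J _ k).trans (powColon_powColon_le J K m k)

variable {SG}

theorem SemiGraded.Bge_antitone : Antitone (SG.Bge B) := by
  intro s t hst
  refine sInf_le_sInf fun I hI => ⟨le_trans ?_ hI.1, hI.2⟩
  exact biSup_mono fun p hp => le_trans hst hp

variable (SG) in
/-- The elements of `M` sent to `K` by all products of `s` elements of `B_{≥s}`. -/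
def SemiGraded.colon (K : Submodule B M) (s : ℕ) : Submodule B M :=
  powColon (SG.Bge B s) K s

theorem SemiGraded.powColon_le_colon (K : Submodule B M) {s n t : ℕ} (hs : s ≤ t) (hn : n ≤ t) :
    powColon (SG.Bge B s) K n ≤ SG.colon K t :=
  (powColon_mono_right _ K hn).trans (powColon_anti (SemiGraded.Bge_antitone hs) K t)

theorem SemiGraded.colon_monotone (K : Submodule B M) : Monotone (SG.colon K) :=
  fun _ _ h => SemiGraded.powColon_le_colon K h h

theorem SemiGraded.exists_mem_colon {K : Submodule B M} {x : M} :
    (∃ s, x ∈ SG.colon K s) ↔ ∃ s n : ℕ, ∀ c : Fin n → B, (∀ j, c j ∈ SG.Bge B s) →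
      (List.ofFn c).prod • x ∈ K := by
  constructor
  · rintro ⟨s, h⟩
    exact ⟨s, s, mem_powColon.1 h⟩
  · rintro ⟨s, n, h⟩
    exact ⟨max s n, SemiGraded.powColon_le_colon K (le_max_left s n) (le_max_right s n)
      (mem_powColon.2 h)⟩

theorem SemiGraded.isTorsionElem_iff {x : M} :
    SG.IsTorsionElem B x ↔ ∃ s, x ∈ SG.colon (⊥ : Submodule B M) s := by
  rw [SemiGraded.exists_mem_colon]
  rfl

theorem SemiGraded.IsTorsionElem.map {x : M} (h : SG.IsTorsionElem B x) (f : M →ₗ[B] N) :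
    SG.IsTorsionElem B (f x) := by
  obtain ⟨s, n, h⟩ := h
  exact ⟨s, n, fun c hc => by rw [← map_smul, h c hc, map_zero]⟩

theorem SemiGraded.IsTorsionElem.of_map {x : M} {f : M →ₗ[B] N} (hf : Function.Injective f)
    (h : SG.IsTorsionElem B (f x)) : SG.IsTorsionElem B x := by
  obtain ⟨s, n, h⟩ := h
  exact ⟨s, n, fun c hc => hf (by rw [map_smul, h c hc, map_zero])⟩

theorem SemiGraded.exists_colon_eq_top [Module.Finite B M]
    (h : ∀ x : M, SG.IsTorsionElem B x) : ∃ s, SG.colon (⊥ : Submodule B M) s = ⊤ := by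
  choose t ht using fun x => SemiGraded.isTorsionElem_iff.1 (h x)
  obtain ⟨S, hS⟩ := Module.Finite.fg_top (R := B) (M := M)
  refine ⟨S.sup t, top_le_iff.1 ?_⟩
  rw [← hS, Submodule.span_le]
  exact fun x hx => SemiGraded.colon_monotone _ (Finset.le_sup hx) (ht x)

/-- An extension of torsion modules is torsion, provided that the submodule is finitely
generated. -/
theorem SemiGraded.isTorsionElem_of_extension {M' M'' : Type} [AddCommGroup M'] [Module B M']
    [AddCommGroup M''] [Module B M''] [Module.Finite B M'] {f : M' →ₗ[B] M} {g : M →ₗ[B] M''}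
    (hfg : LinearMap.ker g ≤ LinearMap.range f) (h' : ∀ x : M', SG.IsTorsionElem B x)
    (h'' : ∀ x : M'', SG.IsTorsionElem B x) (x : M) : SG.IsTorsionElem B x := by
  obtain ⟨s, hs⟩ := SemiGraded.exists_colon_eq_top h'
  obtain ⟨t, ht⟩ := SemiGraded.isTorsionElem_iff.1 (h'' (g x))
  have h₁ : LinearMap.range f ≤ SG.colon ⊥ s := by
    rintro _ ⟨y, rfl⟩
    have hy : y ∈ SG.colon (⊥ : Submodule B M') s := hs ▸ Submodule.mem_top
    have := powColon_mono (J := SG.Bge B s) (bot_le (a := (⊥ : Submodule B M).comap f)) s hy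
    rwa [powColon_comap] at this
  have h₂ : x ∈ SG.colon (LinearMap.ker g) t := by
    rwa [SemiGraded.colon, LinearMap.ker, powColon_comap]
  set u := max s t
  have h₃ : x ∈ powColon (SG.Bge B u) (powColon (SG.Bge B u) (⊥ : Submodule B M) u) u :=
    powColon_mono (hfg.trans (h₁.trans (SemiGraded.colon_monotone _ (le_max_left s t)))) u
      (SemiGraded.colon_monotone _ (le_max_right s t) h₂)
  exact ⟨u, u + u, mem_powColon.1 (powColon_powColon_le _ _ _ _ h₃)⟩

end PowColon

namespace SgrObj

open Limits ZeroObject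

variable {B SG}

section Proj

variable (M : SgrObj B SG)

/-- The projection of a semi-graded module to its component of degree `n`. -/
noncomputable def proj (n : ℤ) : M.carrier →+ M.carrier :=
  (M.comp n).subtype.comp ((DFinsupp.evalAddMonoidHom n).comp
    (AddEquiv.ofBijective _ M.internal).symm.toAddMonoidHom)

theorem proj_mem (n : ℤ) (x : M.carrier) : M.proj n x ∈ M.comp n :=
  Subtype.property _

theorem proj_coe (n k : ℤ) (x : M.comp k) :
    M.proj n x = (DirectSum.of (fun i => M.comp i) k x n : M.carrier) := by
  have : (AddEquiv.ofBijective _ M.internal).symm (x : M.carrier) =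
      DirectSum.of (fun i => M.comp i) k x := by
    rw [AddEquiv.symm_apply_eq]
    exact (DirectSum.coeAddMonoidHom_of _ _ _).symm
  change ((AddEquiv.ofBijective _ M.internal).symm (x : M.carrier) n : M.carrier) = _
  rw [this]

theorem proj_of_mem {n : ℤ} {x : M.carrier} (hx : x ∈ M.comp n) : M.proj n x = x := by
  rw [M.proj_coe n n ⟨x, hx⟩, DirectSum.of_eq_same]

theorem proj_of_ne {m n : ℤ} (h : m ≠ n) {x : M.carrier} (hx : x ∈ M.comp m) :
    M.proj n x = 0 := by
  rw [M.proj_coe n m ⟨x, hx⟩, DirectSum.of_eq_of_ne _ _ _ h.symm]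
  rfl

theorem exists_sum_proj (x : M.carrier) :
    ∃ s : Finset ℤ, ∀ t, s ⊆ t → ∑ n ∈ t, M.proj n x = x := by
  classical
  obtain ⟨z, rfl⟩ := M.internal.2 x
  induction z using DirectSum.induction_on with
  | zero => exact ⟨∅, by simp⟩
  | of i y =>
    refine ⟨{i}, fun t ht => ?_⟩
    rw [DirectSum.coeAddMonoidHom_of,
      Finset.sum_eq_single_of_mem i (ht (Finset.mem_singleton_self i)) fun j _ hj =>
        M.proj_of_ne hj.symm y.2, M.proj_of_mem y.2]
  | add y z hy hz =>
    obtain ⟨s, hs⟩ := hy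
    obtain ⟨s', hs'⟩ := hz
    refine ⟨s ∪ s', fun t ht => ?_⟩
    simp only [map_add, Finset.sum_add_distrib]
    rw [hs t (Finset.union_subset_left ht), hs' t (Finset.union_subset_right ht)]

variable {M} in
@[elab_as_elim]
theorem hom_induction {motive : M.carrier → Prop} (zero : motive 0)
    (mem : ∀ n, ∀ x ∈ M.comp n, motive x)
    (add : ∀ x y, motive x → motive y → motive (x + y)) (x : M.carrier) : motive x := by
  obtain ⟨s, hs⟩ := M.exists_sum_proj x
  rw [← hs s subset_rfl]
  exact Finset.sum_induction _ _ add zero fun n _ => mem n _ (M.proj_mem n x)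

theorem proj_smul_eq_zero {m : ℕ} {n k : ℤ} {b : B} (hb : b ∈ SG.comp m) {v : M.carrier}
    (hv : v ∈ M.comp n) (hk : m + n < k) : M.proj k (b • v) = 0 := by
  have : ⨆ i ∈ Set.Iic ((m : ℤ) + n), M.comp i ≤ (M.proj k).ker :=
    iSup₂_le fun i hi x hx => M.proj_of_ne (ne_of_lt (lt_of_le_of_lt hi hk)) hx
  exact this (M.smul_mem m n b hb v hv)

end Proj

/-- A semi-graded module given by a complete system of projections. -/
def ofProj (A : Type) [AddCommGroup A] [Module B A] [Module.Finite B A]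
    (S : ℤ → AddSubgroup A) (p : ℤ → A →+ A) (hid : ∀ n, ∀ x ∈ S n, p n x = x)
    (hne : ∀ m n, m ≠ n → ∀ x ∈ S m, p n x = 0) (hmem : ∀ n x, p n x ∈ S n)
    (hsum : ∀ x, ∃ s : Finset ℤ, ∀ t, s ⊆ t → ∑ n ∈ t, p n x = x)
    (hsmul : ∀ (m : ℕ) (n k : ℤ), ∀ b ∈ SG.comp m, ∀ v ∈ S n, m + n < k → p k (b • v) = 0) :
    SgrObj B SG where
  carrier := A
  comp := S
  internal := isInternal_of_proj hid hne hmem hsum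
  smul_mem m n b hb v hv := mem_iSup_Iic_of_proj hmem hsum fun k hk => hsmul m n k b hb v hv hk
  fg := inferInstance

section Hom

variable {M N P : SgrObj B SG}

theorem hom_ext {f g : M ⟶ N} (h : ∀ x, f.1 x = g.1 x) : f = g :=
  Subtype.ext (LinearMap.ext h)

theorem map_proj (f : M ⟶ N) (n : ℤ) (x : M.carrier) : f.1 (M.proj n x) = N.proj n (f.1 x) := by
  induction x using hom_induction with
  | zero => simp
  | mem k x hx =>
    by_cases h : k = n
    · subst h
      rw [M.proj_of_mem hx, N.proj_of_mem (f.2 k x hx)]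
    · rw [M.proj_of_ne h hx, N.proj_of_ne h (f.2 k x hx), map_zero]
  | add x y hx hy => simp only [map_add, hx, hy]

variable (M N) in
/-- The additive group of homogeneous homomorphisms. -/
def homSubgroup : AddSubgroup (M.carrier →ₗ[B] N.carrier) where
  carrier := {f | ∀ n : ℤ, ∀ x ∈ M.comp n, f x ∈ N.comp n}
  zero_mem' _ _ _ := zero_mem _
  add_mem' hf hg n x hx := add_mem (hf n x hx) (hg n x hx)
  neg_mem' hf n x hx := neg_mem (hf n x hx)

instance : AddCommGroup (M ⟶ N) := inferInstanceAs (AddCommGroup (homSubgroup M N))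

instance : Preadditive (SgrObj B SG) where
  add_comp _ _ _ f f' g := hom_ext fun x => map_add g.1 (f.1 x) (f'.1 x)
  comp_add _ _ _ _ _ _ := rfl

end Hom

section Sub

variable [IsNoetherianRing B] (M : SgrObj B SG) (K : Submodule B M.carrier)
  (hK : ∀ n, ∀ x ∈ K, M.proj n x ∈ K)

/-- The semi-graded submodule associated with a submodule stable by projections. -/
noncomputable def sub : SgrObj B SG :=
  haveI := M.fg
  haveI : Module.Finite B K := Module.IsNoetherian.finite B K
  ofProj K (fun n => (M.comp n).comap K.subtype.toAddMonoidHom)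
    (fun n => ((M.proj n).comp K.subtype.toAddMonoidHom).codRestrict K.toAddSubgroup
      fun x => hK n x x.2)
    (fun _ _ hx => Subtype.ext (M.proj_of_mem hx))
    (fun _ _ h _ hx => Subtype.ext (M.proj_of_ne h hx))
    (fun n x => M.proj_mem n x)
    (fun x => (M.exists_sum_proj x).imp fun s hs t ht => Subtype.ext (by
      rw [AddSubmonoidClass.coe_finsetSum]
      exact hs t ht))
    (fun _ _ _ _ hb _ hv hk => Subtype.ext (M.proj_smul_eq_zero hb hv hk))

/-- The inclusion of a semi-graded submodule. -/
noncomputable def subι : M.sub K hK ⟶ M := ⟨K.subtype, fun _ _ hx => hx⟩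

theorem subι_injective : Function.Injective (M.subι K hK).1 := Subtype.val_injective

theorem range_subι : LinearMap.range (M.subι K hK).1 = K := K.range_subtype

end Sub

section Quot

variable (M : SgrObj B SG) (K : Submodule B M.carrier) (hK : ∀ n, ∀ x ∈ K, M.proj n x ∈ K)

/-- The projections on the quotient of a semi-graded module by a semi-graded submodule. -/
noncomputable def quotProj (n : ℤ) : M.carrier ⧸ K →+ M.carrier ⧸ K :=
  QuotientAddGroup.map K.toAddSubgroup K.toAddSubgroup (M.proj n) (hK n)

theorem quotProj_mk (n : ℤ) (x : M.carrier) :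
    M.quotProj K hK n (K.mkQ x) = K.mkQ (M.proj n x) := rfl

/-- The quotient of a semi-graded module by a submodule stable by projections. -/
noncomputable def quot : SgrObj B SG :=
  haveI := M.fg
  ofProj (M.carrier ⧸ K) (fun n => (M.comp n).map K.mkQ.toAddMonoidHom) (M.quotProj K hK)
    (by
      rintro n _ ⟨x, hx, rfl⟩
      exact congrArg K.mkQ (M.proj_of_mem hx))
    (by
      rintro m n h _ ⟨x, hx, rfl⟩
      exact (congrArg K.mkQ (M.proj_of_ne h hx)).trans (map_zero _))
    (fun n y => by
      obtain ⟨x, rfl⟩ := K.mkQ_surjective y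
      exact ⟨_, M.proj_mem n x, rfl⟩)
    (fun y => by
      obtain ⟨x, rfl⟩ := K.mkQ_surjective y
      refine (M.exists_sum_proj x).imp fun s hs t ht => ?_
      simp only [quotProj_mk, ← map_sum]
      rw [hs t ht])
    (by
      rintro m n k b hb _ ⟨x, hx, rfl⟩ hk
      exact (congrArg K.mkQ (M.proj_smul_eq_zero hb hx hk)).trans (map_zero _))

/-- The projection to the quotient by a semi-graded submodule. -/
noncomputable def quotπ : M ⟶ M.quot K hK := ⟨K.mkQ, fun _ x hx => ⟨x, hx, rfl⟩⟩

theorem quotπ_surjective : Function.Surjective (M.quotπ K hK).1 := K.mkQ_surjective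

theorem ker_quotπ : LinearMap.ker (M.quotπ K hK).1 = K := K.ker_mkQ

end Quot

section Exactness

variable {M N P : SgrObj B SG}

theorem mem_comp_of_map_injective {f : M ⟶ N} (hf : Function.Injective f.1) {n : ℤ}
    {x : M.carrier} (hx : f.1 x ∈ N.comp n) : x ∈ M.comp n := by
  have : M.proj n x = x := hf (by rw [map_proj, N.proj_of_mem hx])
  exact this ▸ M.proj_mem n x

theorem exists_mem_comp_of_surjective {f : M ⟶ N} (hf : Function.Surjective f.1) {n : ℤ}
    {y : N.carrier} (hy : y ∈ N.comp n) : ∃ x ∈ M.comp n, f.1 x = y := by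
  obtain ⟨x, rfl⟩ := hf y
  exact ⟨_, M.proj_mem n x, by rw [map_proj, N.proj_of_mem hy]⟩

theorem mono_of_injective {f : M ⟶ N} (hf : Function.Injective f.1) : Mono f where
  right_cancellation _ _ h := hom_ext fun x => hf (congrArg (fun k => k.1 x) h)

theorem epi_of_surjective {f : M ⟶ N} (hf : Function.Surjective f.1) : Epi f where
  left_cancellation _ _ h := hom_ext fun y => by
    obtain ⟨x, rfl⟩ := hf y
    exact congrArg (fun k => k.1 x) h

theorem exists_lift {f : M ⟶ N} (hf : Function.Injective f.1) (g : P ⟶ N)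
    (h : LinearMap.range g.1 ≤ LinearMap.range f.1) : ∃ l : P ⟶ M, l ≫ f = g := by
  let e := LinearEquiv.ofInjective f.1 hf
  let l : P.carrier →ₗ[B] M.carrier :=
    e.symm.toLinearMap ∘ₗ g.1.codRestrict (LinearMap.range f.1) fun x => h ⟨x, rfl⟩
  have hl : ∀ x, f.1 (l x) = g.1 x := fun x =>
    congrArg Subtype.val (e.apply_symm_apply ⟨g.1 x, h ⟨x, rfl⟩⟩)
  exact ⟨⟨l, fun n x hx => mem_comp_of_map_injective hf ((hl x).symm ▸ g.2 n x hx)⟩, hom_ext hl⟩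

theorem exists_desc {f : M ⟶ N} (hf : Function.Surjective f.1) (g : M ⟶ P)
    (h : LinearMap.ker f.1 ≤ LinearMap.ker g.1) : ∃ l : N ⟶ P, f ≫ l = g := by
  let e := f.1.quotKerEquivOfSurjective hf
  let l : N.carrier →ₗ[B] P.carrier := (LinearMap.ker f.1).liftQ g.1 h ∘ₗ e.symm.toLinearMap
  have hl : ∀ x, l (f.1 x) = g.1 x := fun x => by
    have : e.symm (f.1 x) = Submodule.Quotient.mk x := by
      rw [LinearEquiv.symm_apply_eq]
      rfl
    simp only [l, LinearMap.comp_apply, LinearEquiv.coe_coe, this]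
    exact Submodule.liftQ_apply _ _ _
  refine ⟨⟨l, fun n y hy => ?_⟩, hom_ext hl⟩
  obtain ⟨x, hx, rfl⟩ := exists_mem_comp_of_surjective hf hy
  rw [hl]
  exact g.2 n x hx

theorem range_le_ker_iff {f : M ⟶ N} {g : N ⟶ P} :
    f ≫ g = 0 ↔ LinearMap.range f.1 ≤ LinearMap.ker g.1 := by
  constructor
  · rintro h _ ⟨x, rfl⟩
    exact congrArg (fun k => k.1 x) h
  · exact fun h => hom_ext fun x => h ⟨x, rfl⟩

/-- An injective map whose range is the kernel of `g` is a kernel of `g`. -/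
noncomputable def isLimitKernelFork {f : M ⟶ N} {g : N ⟶ P} (hf : Function.Injective f.1)
    (h : LinearMap.range f.1 = LinearMap.ker g.1) :
    IsLimit (KernelFork.ofι f (range_le_ker_iff.2 h.le)) :=
  haveI := mono_of_injective hf
  KernelFork.IsLimit.ofι' f _ fun k hk =>
    have hl := exists_lift hf k (h ▸ range_le_ker_iff.1 hk)
    ⟨hl.choose, hl.choose_spec⟩

/-- A surjective map whose kernel is the range of `f` is a cokernel of `f`. -/
noncomputable def isColimitCokernelCofork {f : M ⟶ N} {g : N ⟶ P}
    (hg : Function.Surjective g.1) (h : LinearMap.range f.1 = LinearMap.ker g.1) :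
    IsColimit (CokernelCofork.ofπ g (range_le_ker_iff.2 h.le)) :=
  haveI := epi_of_surjective hg
  CokernelCofork.IsColimit.ofπ' g _ fun k hk =>
    have hl := exists_desc hg k (h ▸ range_le_ker_iff.1 hk)
    ⟨hl.choose, hl.choose_spec⟩

theorem proj_mem_ker (f : M ⟶ N) (n : ℤ) (x : M.carrier) (hx : x ∈ LinearMap.ker f.1) :
    M.proj n x ∈ LinearMap.ker f.1 := by
  rw [LinearMap.mem_ker] at hx ⊢
  rw [map_proj, hx, map_zero]

theorem proj_mem_range (f : M ⟶ N) (n : ℤ) (y : N.carrier) (hy : y ∈ LinearMap.range f.1) :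
    N.proj n y ∈ LinearMap.range f.1 := by
  obtain ⟨x, rfl⟩ := hy
  exact ⟨M.proj n x, map_proj f n x⟩

/-- The inclusion of the kernel. -/
noncomputable abbrev kerι [IsNoetherianRing B] (f : M ⟶ N) :
    M.sub (LinearMap.ker f.1) (proj_mem_ker f) ⟶ M :=
  M.subι _ (proj_mem_ker f)

/-- The projection to the cokernel. -/
noncomputable abbrev cokerπ (f : M ⟶ N) : N ⟶ N.quot (LinearMap.range f.1) (proj_mem_range f) :=
  N.quotπ _ (proj_mem_range f)

theorem injective_of_mono [IsNoetherianRing B] (f : M ⟶ N) [Mono f] :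
    Function.Injective f.1 := by
  rw [injective_iff_map_eq_zero]
  intro x hx
  have h : kerι f = 0 :=
    zero_of_comp_mono f (range_le_ker_iff.2 (M.range_subι _ (proj_mem_ker f)).le)
  exact congrArg (fun k => k.1 ⟨x, hx⟩) h

theorem surjective_of_epi (f : M ⟶ N) [Epi f] : Function.Surjective f.1 := by
  intro y
  have h : cokerπ f = 0 :=
    zero_of_epi_comp f (range_le_ker_iff.2 (N.ker_quotπ _ (proj_mem_range f)).ge)
  have hy : (cokerπ f).1 y = 0 := congrArg (fun k => k.1 y) h
  rwa [← LinearMap.mem_ker, ker_quotπ] at hy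

end Exactness

section Abelian

instance : HasZeroObject (SgrObj B SG) where
  zero := by
    refine ⟨ofProj PUnit (fun _ => ⊥) (fun _ => 0) ?_ ?_ ?_ ?_ ?_, ?_⟩
    any_goals intros
    any_goals rfl
    · exact ⟨∅, fun _ _ => rfl⟩
    · rw [IsZero.iff_id_eq_zero]
      rfl

/-- The direct sum of two semi-graded modules. -/
noncomputable def prod (M N : SgrObj B SG) : SgrObj B SG :=
  haveI := M.fg
  haveI := N.fg
  ofProj (M.carrier × N.carrier) (fun n => (M.comp n).prod (N.comp n))
    (fun n => (M.proj n).prodMap (N.proj n))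
    (fun _ _ hx => Prod.ext (M.proj_of_mem hx.1) (N.proj_of_mem hx.2))
    (fun _ _ h _ hx => Prod.ext (M.proj_of_ne h hx.1) (N.proj_of_ne h hx.2))
    (fun n x => ⟨M.proj_mem n x.1, N.proj_mem n x.2⟩)
    (fun x => by
      classical
      obtain ⟨s, hs⟩ := M.exists_sum_proj x.1
      obtain ⟨s', hs'⟩ := N.exists_sum_proj x.2
      refine ⟨s ∪ s', fun t ht => Prod.ext ?_ ?_⟩
      · rw [Prod.fst_sum]
        exact hs t (Finset.union_subset_left ht)
      · rw [Prod.snd_sum]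
        exact hs' t (Finset.union_subset_right ht))
    (fun _ _ _ _ hb _ hv hk =>
      Prod.ext (M.proj_smul_eq_zero hb hv.1 hk) (N.proj_smul_eq_zero hb hv.2 hk))

/-- The biproduct bicone of two semi-graded modules. -/
noncomputable def bicone (M N : SgrObj B SG) : BinaryBicone M N where
  pt := M.prod N
  fst := ⟨LinearMap.fst B M.carrier N.carrier, fun _ _ hx => hx.1⟩
  snd := ⟨LinearMap.snd B M.carrier N.carrier, fun _ _ hx => hx.2⟩
  inl := ⟨LinearMap.inl B M.carrier N.carrier, fun _ _ hx => ⟨hx, zero_mem _⟩⟩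
  inr := ⟨LinearMap.inr B M.carrier N.carrier, fun _ _ hx => ⟨zero_mem _, hx⟩⟩
  inl_fst := rfl
  inl_snd := rfl
  inr_fst := rfl
  inr_snd := rfl

instance : HasBinaryBiproducts (SgrObj B SG) where
  has_binary_biproduct M N := ⟨⟨⟨bicone M N, isBinaryBilimitOfTotal _
    (hom_ext fun x => Prod.ext (add_zero x.1) (zero_add x.2))⟩⟩⟩

variable [IsNoetherianRing B]

noncomputable instance : Abelian (SgrObj B SG) where
  normalMonoOfMono f _ := ⟨⟨_, cokerπ f, _,
    isLimitKernelFork (injective_of_mono f) (ker_quotπ _ _ _).symm⟩⟩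
  normalEpiOfEpi f _ := ⟨⟨_, kerι f, _,
    isColimitCokernelCofork (surjective_of_epi f) (range_subι _ _ _)⟩⟩
  has_finite_products := hasFiniteProducts_of_has_binary_and_terminal
  has_kernels := ⟨fun f => ⟨⟨_, isLimitKernelFork (f := kerι f)
    (subι_injective _ _ _) (range_subι _ _ _)⟩⟩⟩
  has_cokernels := ⟨fun f => ⟨⟨_, isColimitCokernelCofork (g := cokerπ f)
    (quotπ_surjective _ _ _) (ker_quotπ _ _ _).symm⟩⟩⟩

end Abelian

section Serre

theorem IsTorsion.of_injective {M N : SgrObj B SG} (f : M ⟶ N) (hf : Function.Injective f.1)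
    (h : N.IsTorsion) : M.IsTorsion :=
  fun x => (h (f.1 x)).of_map hf

theorem IsTorsion.of_surjective {M N : SgrObj B SG} (f : M ⟶ N) (hf : Function.Surjective f.1)
    (h : M.IsTorsion) : N.IsTorsion := fun y => by
  obtain ⟨x, rfl⟩ := hf y
  exact (h x).map f.1

theorem isTorsion_iff_of_exact {M' M M'' : SgrObj B SG} {f : M' ⟶ M} {g : M ⟶ M''}
    (hf : Function.Injective f.1) (hg : Function.Surjective g.1)
    (hfg : LinearMap.ker g.1 ≤ LinearMap.range f.1) :
    M.IsTorsion ↔ M'.IsTorsion ∧ M''.IsTorsion :=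
  ⟨fun h => ⟨h.of_injective f hf, h.of_surjective g hg⟩, fun h =>
    haveI := M'.fg
    SemiGraded.isTorsionElem_of_extension hfg h.1 h.2⟩

variable [IsNoetherianRing B]

variable (B SG) in
/-- The full subcategory `stor-B` of torsion modules. -/
def stor : ObjectProperty (SgrObj B SG) := fun M => M.IsTorsion

instance : (stor B SG).IsSerreClass where
  exists_zero := ⟨0, isZero_zero _, fun x => ⟨0, 0, fun c hc => by
    have h : 𝟙 (0 : SgrObj B SG) = 0 := (isZero_zero _).eq_of_src _ _
    have : x = 0 := congrArg (fun k => k.1 x) h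
    rw [this, smul_zero]⟩⟩
  prop_of_mono f _ h := IsTorsion.of_injective f (injective_of_mono f) h
  prop_of_epi f _ h := IsTorsion.of_surjective f (surjective_of_epi f) h
  prop_X₂_of_shortExact {S} hS h₁ h₃ := by
    have := hS.mono_f
    have := hS.epi_g
    refine (isTorsion_iff_of_exact (injective_of_mono S.f) (surjective_of_epi S.g)
      fun x hx => ?_).2 ⟨h₁, h₃⟩
    have hw : kerι S.g ≫ S.g = 0 := range_le_ker_iff.2 (range_subι _ _ _).le
    exact ⟨(hS.exact.lift _ hw).1 ⟨x, hx⟩,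
      congrArg (fun k => k.1 ⟨x, hx⟩) (hS.exact.lift_f (kerι S.g) hw)⟩

theorem torsionW_eq_isoModSerre : torsionW B SG = (stor B SG).isoModSerre := by
  ext M N f
  have eK : kernel f ≅ M.sub _ (proj_mem_ker f) := (kernelIsKernel f).conePointUniqueUpToIso
    (isLimitKernelFork (f := kerι f) (subι_injective _ _ _) (range_subι _ _ _))
  have eC : cokernel f ≅ N.quot _ (proj_mem_range f) :=
    (cokernelIsCokernel f).coconePointUniqueUpToIso
      (isColimitCokernelCofork (g := cokerπ f) (quotπ_surjective _ _ _) (ker_quotπ _ _ _).symm)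
  have hK : stor B SG (kernel f) ↔ ∀ x : M.carrier, f.1 x = 0 → SG.IsTorsionElem B x :=
    ((stor B SG).prop_iff_of_iso eK).trans
      ⟨fun h x hx => (h ⟨x, hx⟩).map (kerι f).1,
        fun h x => (h x.1 x.2).of_map (subι_injective _ _ _)⟩
  have hC : stor B SG (cokernel f) ↔ ∀ y : N.carrier, ∃ s n : ℕ, ∀ c : Fin n → B,
      (∀ j, c j ∈ SG.Bge B s) → (List.ofFn c).prod • y ∈ LinearMap.range f.1 :=
    ((stor B SG).prop_iff_of_iso eC).trans <|
      (LinearMap.range f.1).mkQ_surjective.forall.trans <| forall_congr' fun y =>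
        exists₂_congr fun s n => forall₂_congr fun c _ =>
          Submodule.Quotient.mk_eq_zero (LinearMap.range f.1) (x := (List.ofFn c).prod • y)
  exact (and_congr hK hC).symm

end Serre

end SgrObj

/-- Let `B` satisfy (C1)–(C4).  Then the torsion modules form a Serre subcategory of
`sgr-B`: for every short exact sequence `0 → M' → M → M'' → 0` in `sgr-B`, `M` is torsion
iff both `M'` and `M''` are torsion.  Consequently the quotient category
`qsgr-B := sgr-B/stor-B` is abelian. -/
theorem stor_serre_and_qsgr_abelian
    -- (C1) `B` is left noetherian (and semi-graded, via `SG`)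
    (hC1 : IsNoetherianRing B)
    -- (C2) `B_0` is left noetherian
    (hC2 : ∀ c : ℕ →o AddSubgroup B,
      (∀ m, c m ≤ SG.comp 0 ∧ ∀ b ∈ SG.comp 0, ∀ w ∈ c m, b * w ∈ c m) →
      ∃ N, ∀ m, N ≤ m → c m = c N)
    -- (C3) each `B_n` is a finitely generated left `B_0`-module
    (hC3 : ∀ n : ℕ, ∃ (k : ℕ) (v : Fin k → B), (∀ i, v i ∈ SG.comp n) ∧
      ∀ b ∈ SG.comp n, ∃ c : Fin k → B, (∀ i, c i ∈ SG.comp 0) ∧ b = ∑ i, c i * v i)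
    -- (C4) `B_0 ⊆ Z(B)`
    (hC4 : (SG.comp 0 : Set B) ⊆ Set.center B) :
    (∀ (M' M M'' : SgrObj B SG) (ι : M' ⟶ M) (j : M ⟶ M''),
      Function.Injective ι.1 → Function.Surjective j.1 →
      LinearMap.range ι.1 = LinearMap.ker j.1 →
      (M.IsTorsion ↔ M'.IsTorsion ∧ M''.IsTorsion)) ∧
    Nonempty (Abelian (torsionW B SG).Localization) := by
  refine ⟨fun M' M M'' ι j hι hj h => SgrObj.isTorsion_iff_of_exact hι hj h.ge, ?_⟩
  rw [SgrObj.torsionW_eq_isoModSerre]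
  exact ⟨ObjectProperty.SerreClassLocalization.abelian
    (SgrObj.stor B SG).isoModSerre.Q (SgrObj.stor B SG)⟩
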